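/- Let f : H_M → H_N be a contraction map, let (x,y) and (a,b) be Hamming distance preserving pairs in H_M, and let z ∈ H_M be 1-off Hamming paths between x and y and also 1-off Hamming paths between a and b. Suppose there exists a coordinate r ∈ [N] with f(x)_r = f(y)_r ≠ f(a)_r = f(b)_r. Then: (i) for every coordinate s ∈ [N] with f(x)_s = f(y)_s = f(a)_s = f(b)_s, one has f(z)_s equal to this common value; and (ii) f(z)_r differs from exactly one of the two values f(x)_r and f(a)_r, and if f(z)_r = f(x)_r then f(z)_s = f(a)_s for every coordinate s ≠ r with f(a)_s = f(b)_s, while if f(z)_r = f(a)_r then f(z)_s = f(x)_s for every coordinate s ≠ r with f(x)_s = f(y)_s. -/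

import Mathlib

open Finset

/-- Weighted Hamming distance on the hypercube `{0,1}^M` (bits modeled as `Bool`):
`d_γ(x,y) = Σ_i γ_i |x_i - y_i|`. -/
def hamDist {M : ℕ} (γ : Fin M → ℤ) (x y : Fin M → Bool) : ℤ :=
  ∑ i, if x i = y i then 0 else γ i

/-- `z` is on a Hamming path between `x` and `y`: `z` agrees with `x` (and `y`)
on every coordinate where `x` and `y` agree. -/
def onHamPath {M : ℕ} (x y z : Fin M → Bool) : Prop :=
  ∀ k, x k = y k → z k = x k

instance {M : ℕ} (x y : Fin M → Bool) : DecidablePred (onHamPath x y) :=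
  fun z => inferInstanceAs (Decidable (∀ k, x k = y k → z k = x k))

/-- `HP(x,y)`: the (finite, nonempty) set of vertices on Hamming paths between `x` and `y`. -/
def hpSet {M : ℕ} (x y : Fin M → Bool) : Finset (Fin M → Bool) :=
  Finset.univ.filter (onHamPath x y)

lemma hpSet_nonempty {M : ℕ} (x y : Fin M → Bool) : (hpSet x y).Nonempty :=
  ⟨x, by simp [hpSet, onHamPath]⟩

/-- `z` is `k`-off Hamming paths between `x` and `y` when
`k = min_{e ∈ HP(x,y)} d_γ(z,e)`; this is that minimum. -/
def offDist {M : ℕ} (γ : Fin M → ℤ) (x y z : Fin M → Bool) : ℤ :=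
  (hpSet x y).inf' (hpSet_nonempty x y) (fun e => hamDist γ z e)

/-!
The identity `d(x,z) + d(z,y) - d(x,y) = 2 · offDist x y z` makes `offDist` a Gromov product, so
a contraction that preserves `d(x,y)` cannot increase the off-distance of `z` from `x` and `y`.
It is also the total weight of the coordinates where `x` and `y` agree but `z` differs from them.
As the weights are at least one, `f z` disagrees with `f x = f y` in at most one coordinate where
these agree, and likewise for `f a = f b`. At `r`, one of these two disagreements occurs.
-/

section OffDist

variable {n : ℕ} {γ : Fin n → ℤ} {x y z : Fin n → Bool}

/-- The coordinates where `x` and `y` agree but `z` differs from them, i.e. those obstructing `z`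
from lying on a Hamming path between `x` and `y`. -/
def offCoords (x y z : Fin n → Bool) : Finset (Fin n) :=
  {i | x i = y i ∧ z i ≠ x i}

lemma mem_offCoords {i : Fin n} : i ∈ offCoords x y z ↔ x i = y i ∧ z i ≠ x i := by
  simp only [offCoords, mem_filter, mem_univ, true_and]

lemma mem_hpSet {e : Fin n → Bool} : e ∈ hpSet x y ↔ onHamPath x y e := by
  simp only [hpSet, mem_filter, mem_univ, true_and]

lemma hamDist_add_hamDist (γ : Fin n → ℤ) (x y z : Fin n → Bool) :
    hamDist γ x z + hamDist γ z y = hamDist γ x y + 2 * ∑ i ∈ offCoords x y z, γ i := by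
  simp only [hamDist, offCoords, sum_filter, mul_sum, ← sum_add_distrib]
  refine sum_congr rfl fun i _ => ?_
  cases x i <;> cases y i <;> cases z i <;> simp [two_mul]

lemma sum_offCoords_le_hamDist (hγ : ∀ i, 0 ≤ γ i) {e : Fin n → Bool} (he : onHamPath x y e) :
    ∑ i ∈ offCoords x y z, γ i ≤ hamDist γ z e := by
  rw [hamDist, offCoords, sum_filter]
  refine sum_le_sum fun i _ => ?_
  by_cases hi : x i = y i ∧ z i ≠ x i
  · rw [if_pos hi, he i hi.1, if_neg hi.2]
  · rw [if_neg hi]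
    split_ifs
    exacts [le_rfl, hγ i]

lemma exists_onHamPath_hamDist_eq_sum_offCoords (γ : Fin n → ℤ) (x y z : Fin n → Bool) :
    ∃ e, onHamPath x y e ∧ hamDist γ z e = ∑ i ∈ offCoords x y z, γ i := by
  refine ⟨fun i => if x i = y i then x i else z i, fun i hi => if_pos hi, ?_⟩
  rw [hamDist, offCoords, sum_filter]
  refine sum_congr rfl fun i _ => ?_
  by_cases hxy : x i = y i <;> simp [hxy]

lemma offDist_eq_sum_offCoords (hγ : ∀ i, 0 ≤ γ i) (x y z : Fin n → Bool) :
    offDist γ x y z = ∑ i ∈ offCoords x y z, γ i := by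
  apply le_antisymm
  · obtain ⟨e, he, hze⟩ := exists_onHamPath_hamDist_eq_sum_offCoords γ x y z
    exact (inf'_le _ (mem_hpSet.2 he)).trans_eq hze
  · exact le_inf' _ _ fun e he => sum_offCoords_le_hamDist hγ (mem_hpSet.1 he)

lemma two_mul_offDist (hγ : ∀ i, 0 ≤ γ i) (x y z : Fin n → Bool) :
    2 * offDist γ x y z = hamDist γ x z + hamDist γ z y - hamDist γ x y := by
  rw [hamDist_add_hamDist, offDist_eq_sum_offCoords hγ, add_sub_cancel_left]

lemma card_offCoords_le_offDist (hγ : ∀ i, 1 ≤ γ i) (x y z : Fin n → Bool) :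
    (#(offCoords x y z) : ℤ) ≤ offDist γ x y z := by
  rw [offDist_eq_sum_offCoords fun i => zero_le_one.trans (hγ i)]
  simpa only [nsmul_eq_mul, mul_one] using
    card_nsmul_le_sum (offCoords x y z) γ 1 fun i _ => hγ i

lemma eq_of_offDist_le_one (hγ : ∀ i, 1 ≤ γ i) (hz : offDist γ x y z ≤ 1) {s t : Fin n}
    (hst : s ≠ t) (hs : x s = y s) (ht : x t = y t) (hzt : z t ≠ x t) : z s = x s := by
  by_contra hzs
  have hcard : #(offCoords x y z) ≤ 1 := by
    exact_mod_cast (card_offCoords_le_offDist hγ x y z).trans hz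
  exact hst (card_le_one.1 hcard s (mem_offCoords.2 ⟨hs, hzs⟩) t (mem_offCoords.2 ⟨ht, hzt⟩))

end OffDist

lemma offDist_map_le {M N : ℕ} {α : Fin M → ℤ} {β : Fin N → ℤ}
    (hα : ∀ i, 0 ≤ α i) (hβ : ∀ r, 0 ≤ β r) {f : (Fin M → Bool) → (Fin N → Bool)}
    (hf : ∀ x x', hamDist β (f x) (f x') ≤ hamDist α x x') {x y : Fin M → Bool}
    (hxy : hamDist α x y = hamDist β (f x) (f y)) (z : Fin M → Bool) :
    offDist β (f x) (f y) (f z) ≤ offDist α x y z := by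
  linarith [two_mul_offDist hα x y z, two_mul_offDist hβ (f x) (f y) (f z), hf x z, hf z y]

theorem stmt_10 {M N : ℕ} (α : Fin M → ℤ) (β : Fin N → ℤ)
    (hα : ∀ i, 1 ≤ α i) (hβ : ∀ r, 1 ≤ β r)
    (f : (Fin M → Bool) → (Fin N → Bool))
    (hf : ∀ x x', hamDist β (f x) (f x') ≤ hamDist α x x')
    (x y a b : Fin M → Bool)
    (hxy : hamDist α x y = hamDist β (f x) (f y))
    (hab : hamDist α a b = hamDist β (f a) (f b))
    (z : Fin M → Bool)
    (hzxy : offDist α x y z = 1) (hzab : offDist α a b z = 1)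
    (r : Fin N) (hr1 : f x r = f y r) (hr2 : f a r = f b r) (hr3 : f x r ≠ f a r) :
    (∀ s, f x s = f y s → f a s = f b s → f x s = f a s → f z s = f x s) ∧
    (f z r = f x r ↔ ¬ f z r = f a r) ∧
    (f z r = f x r → ∀ s, s ≠ r → f a s = f b s → f z s = f a s) ∧
    (f z r = f a r → ∀ s, s ≠ r → f x s = f y s → f z s = f x s) := by
  have hα₀ i : 0 ≤ α i := zero_le_one.trans (hα i)
  have hβ₀ i : 0 ≤ β i := zero_le_one.trans (hβ i)
  have hfxy : offDist β (f x) (f y) (f z) ≤ 1 := (offDist_map_le hα₀ hβ₀ hf hxy z).trans_eq hzxy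
  have hfab : offDist β (f a) (f b) (f z) ≤ 1 := (offDist_map_le hα₀ hβ₀ hf hab z).trans_eq hzab
  have hr : f z r = f x r ↔ ¬ f z r = f a r := Bool.eq_not_of_ne hr3 ▸ Bool.eq_not_iff
  have eq_a (hzr : f z r = f x r) s (hsr : s ≠ r) (hs : f a s = f b s) : f z s = f a s :=
    eq_of_offDist_le_one hβ hfab hsr hs hr2 (hr.1 hzr)
  have eq_x (hzr : f z r = f a r) s (hsr : s ≠ r) (hs : f x s = f y s) : f z s = f x s :=
    eq_of_offDist_le_one hβ hfxy hsr hs hr1 (hzr.trans_ne hr3.symm)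
  refine ⟨fun s hsx hsa hxa => ?_, hr, eq_a, eq_x⟩
  have hsr : s ≠ r := fun h => hr3 (h ▸ hxa)
  by_cases hzr : f z r = f a r
  · exact eq_x hzr s hsr hsx
  · exact (eq_a (hr.2 hzr) s hsr hsa).trans hxa.symm
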